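/- arXiv:2506.06160 — 2 statements merged into one kernel-verified Lean document; each statement's English description precedes it below -/
import Mathlib

section
/- Let f : ℝ^d → ℝ be a differentiable convex function whose gradient is L-Lipschitz (L > 0) and which has a global minimizer x_*. Given x_0 ∈ ℝ^d, define gradient descent iterates x_{i+1} = x_i − (η_i / L)·∇f(x_i), where η_i is the silver step-size sequence. Then for every integer k ≥ 1 and n = 2^k − 1, one has f(x_n) − f(x_*) ≤ r_k · L · ‖x_0 − x_*‖². -/
/-!
After dividing `f` by `L`, the only information used about `f` is the interpolation inequality
`f_i + ⟪g_i, x_j - x_i⟫ + ½‖g_i - g_j‖² ≤ f_j` between any two points (`smoothLE_of_convex`), where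
`g_* = 0` at the minimizer.

Write `R = ρ^k` and `n = 2^k - 1`, so that the first `n` step sizes sum to `R - 1`. The heart of the
proof is an inequality that mentions no minimizer (`silver_certificate`):
`∑_{i<n} η_i (f_i - f_n + ½‖g_i‖² + ⟪g_i, (x_0 + x_n)/2 - x_i⟫) ≥ R(R-1)/2 ‖g_n‖²`.
Since `η_i g_i = x_i - x_{i+1}`, the terms `⟪g_i, (x_0 + x_n)/2⟫` telescope to
`½(‖x_0‖² - ‖x_n‖²)`. The schedule of length `2^(k+1) - 1` consists of two copies of the schedule of
length `n` around a middle step `μ = 1 + R/ρ`, and the inequality for it follows from the ones for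
the two copies. The missing terms are supplied by referring the second copy to `x_n` and to `x_N`,
the points after the first copy and at the very end (`silverSum_le`), and by the two interpolation
inequalities between those points; with suitable multipliers everything cancels exactly
(`silver_glue`).

Adding the interpolation inequalities from the iterates to the minimizer, with weights `η_i`, gives
`(R-1)(f_n - f_*) + R(R-1)/2 ‖g_n‖² + ½‖x_n - x_*‖² ≤ ½‖x_0 - x_*‖²`. Adding `R` times the
interpolation inequality from `x_n` to `x_*` turns the quadratic terms on the left into the square
`½‖R g_n - (x_n - x_*)‖²`, whence `f_n - f_* ≤ ‖x_0 - x_*‖² / (2(2R - 1))`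
(`silver_rate_normalized`). This constant is at most `r_k`, because `√(4R² - 3) ≤ 4R - 3` for
`R ≥ 1`.
-/

open scoped InnerProductSpace

/-- The silver ratio `ρ = 1 + √2`. -/
noncomputable def silverRho : ℝ := 1 + Real.sqrt 2

/-- The silver step-size schedule `η_i = 1 + ρ^(ν₂(i+1) - 1)`. -/
noncomputable def silverStep (i : ℕ) : ℝ :=
  1 + silverRho ^ ((padicValNat 2 (i + 1) : ℤ) - 1)

/-- The silver rate `r_k = (1 + √(4 ρ^(2k) - 3))⁻¹`. -/
noncomputable def silverRate (k : ℕ) : ℝ :=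
  (1 + Real.sqrt (4 * silverRho ^ (2 * k) - 3))⁻¹


/-! ### Arithmetic of the silver step sizes -/

lemma silverRho_sq : silverRho ^ 2 = 2 * silverRho + 1 := by
  have h : Real.sqrt 2 ^ 2 = 2 := Real.sq_sqrt (by norm_num)
  unfold silverRho
  linear_combination h

lemma two_le_silverRho : 2 ≤ silverRho := by
  have h : 1 ≤ Real.sqrt 2 := Real.one_le_sqrt.2 (by norm_num)
  unfold silverRho
  linarith

lemma silverRho_pos : 0 < silverRho := by
  linarith [two_le_silverRho]

lemma padicValNat_two_pow_add {k m : ℕ} (h0 : 0 < m) (hm : m < 2 ^ k) :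
    padicValNat 2 (2 ^ k + m) = padicValNat 2 m := by
  obtain ⟨v, o, ho, rfl⟩ := Nat.exists_eq_two_pow_mul_odd h0.ne'
  have hv : v < k := by
    by_contra! hkv
    have h1 : 2 ^ k ≤ 2 ^ v := Nat.pow_le_pow_right (by norm_num) hkv
    have h2 : 2 ^ v ≤ 2 ^ v * o := Nat.le_mul_of_pos_right _ ho.pos
    omega
  obtain ⟨j, rfl⟩ := Nat.exists_eq_add_of_lt hv
  have hodd : Odd (2 ^ (j + 1) + o) :=
    Even.add_odd ((Nat.even_pow' (Nat.succ_ne_zero j)).2 even_two) ho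
  have hval : ∀ a : ℕ, Odd a → padicValNat 2 (2 ^ v * a) = v := by
    intro a ha
    rw [padicValNat.mul (by positivity) ha.pos.ne', padicValNat.prime_pow,
      padicValNat.eq_zero_of_not_dvd ha.not_two_dvd_nat, add_zero]
  have hsplit : 2 ^ (v + j + 1) + 2 ^ v * o = 2 ^ v * (2 ^ (j + 1) + o) := by ring
  rw [hsplit, hval _ hodd, hval _ ho]

lemma silverStep_two_pow_add {k i : ℕ} (hi : i + 1 < 2 ^ k) :
    silverStep (2 ^ k + i) = silverStep i := by
  unfold silverStep
  rw [add_assoc, padicValNat_two_pow_add (Nat.succ_pos i) hi]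

/-- The step between the two copies of the previous schedule, written without division:
`ρ⁻¹ = ρ - 2`. -/
lemma silverStep_two_pow_sub_one (k : ℕ) :
    silverStep (2 ^ k - 1) = 1 + (silverRho - 2) * silverRho ^ k := by
  have hinv : silverRho⁻¹ = silverRho - 2 :=
    inv_eq_of_mul_eq_one_right (by linear_combination silverRho_sq)
  unfold silverStep
  rw [Nat.sub_add_cancel Nat.one_le_two_pow, padicValNat.prime_pow,
    zpow_sub_one₀ silverRho_pos.ne', zpow_natCast, hinv, mul_comm]

lemma silverStep_nonneg (i : ℕ) : 0 ≤ silverStep i := by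
  have := zpow_pos silverRho_pos ((padicValNat 2 (i + 1) : ℤ) - 1)
  unfold silverStep
  linarith

/-- A sum over the `2^(k+1) - 1` indices splits at the middle step. -/
lemma sum_range_silver (k : ℕ) (u : ℕ → ℝ) :
    ∑ i ∈ Finset.range (2 ^ (k + 1) - 1), u i =
      ∑ i ∈ Finset.range (2 ^ k - 1), u i + u (2 ^ k - 1) +
        ∑ i ∈ Finset.range (2 ^ k - 1), u (2 ^ k + i) := by
  have h1 : 1 ≤ 2 ^ k := Nat.one_le_two_pow
  have h2 : 2 ^ (k + 1) - 1 = 2 ^ k + (2 ^ k - 1) := by rw [pow_succ]; omega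
  rw [h2, Finset.sum_range_add]
  congr 1
  conv_lhs => rw [← Nat.sub_add_cancel h1]
  rw [Finset.sum_range_succ]

lemma sum_silverStep (k : ℕ) :
    ∑ i ∈ Finset.range (2 ^ k - 1), silverStep i = silverRho ^ k - 1 := by
  induction k with
  | zero => simp
  | succ k ih =>
    have hshift : ∑ i ∈ Finset.range (2 ^ k - 1), silverStep (2 ^ k + i) =
        ∑ i ∈ Finset.range (2 ^ k - 1), silverStep i :=
      Finset.sum_congr rfl fun i hi => silverStep_two_pow_add (by
        have := Finset.mem_range.1 hi
        omega)
    rw [sum_range_silver, hshift, ih, silverStep_two_pow_sub_one]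
    ring

/-! ### The gluing induction -/

section Certificate

variable {E : Type*} [NormedAddCommGroup E] [InnerProductSpace ℝ E]

/-- The interpolation inequality satisfied by a convex function with `1`-Lipschitz gradient, for data
`(x, g, a)` and `(y, h, b)` recording point, gradient and value. -/
def SmoothLE (x g : E) (a : ℝ) (y h : E) (b : ℝ) : Prop :=
  a + ⟪g, y - x⟫_ℝ + 1 / 2 * ‖g - h‖ ^ 2 ≤ b

/-- `∑_{i<n} η_i (f_i + ½‖g_i‖² - ⟪g_i, x_i⟫)`: the part of the weighted sum of interpolation
inequalities from `x_0, …, x_{n-1}` to a reference point `z` that does not depend on the reference point `z`. -/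
noncomputable def silverSum (X G : ℕ → E) (F : ℕ → ℝ) (n : ℕ) : ℝ :=
  ∑ i ∈ Finset.range n, silverStep i * (F i + 1 / 2 * ‖G i‖ ^ 2 - ⟪G i, X i⟫_ℝ)

/-- The interpolation inequalities from each iterate to a common reference point `(z, g, a)`,
summed with the step sizes as weights. The sum telescopes because `η_i g_i = x_i - x_{i+1}`. -/
lemma silverSum_le (X G : ℕ → E) (F : ℕ → ℝ) (z g : E) (a : ℝ) (n : ℕ)
    (hX : ∀ i < n, X (i + 1) = X i - silverStep i • G i)
    (hQ : ∀ i < n, SmoothLE (X i) (G i) (F i) z g a) :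
    silverSum X G F n ≤ (∑ i ∈ Finset.range n, silverStep i) * (a - 1 / 2 * ‖g‖ ^ 2)
      - ⟪X 0 - X n, z - g⟫_ℝ := by
  induction n with
  | zero => simp [silverSum]
  | succ n ih =>
    have ih := ih (fun i hi => hX i (by omega)) (fun i hi => hQ i (by omega))
    have hq := mul_le_mul_of_nonneg_left (hQ n (by omega)) (silverStep_nonneg n)
    rw [norm_sub_sq_real, inner_sub_right] at hq
    have hstep : ⟪X 0 - X (n + 1), z - g⟫_ℝ =
        ⟪X 0 - X n, z - g⟫_ℝ + silverStep n * (⟪G n, z⟫_ℝ - ⟪G n, g⟫_ℝ) := by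
      have : X 0 - X (n + 1) = (X 0 - X n) + silverStep n • G n := by
        rw [hX n (by omega)]; abel
      rw [this, inner_add_left, real_inner_smul_left, inner_sub_right (G n)]
    unfold silverSum at ih ⊢
    rw [Finset.sum_range_succ, Finset.sum_range_succ, hstep]
    linarith

/-- The inductive step in terms of the endpoints alone. Block one runs from `X0` to `(Xn, Gn)`, the
middle step leads from there to `Xn - μ Gn`, and block two from that point to `(XN, GN)`; `V`, `W`
are their `silverSum`s. The multipliers are `1` for the certificate of block one, `1 + 2ρ` for that
of block two, `ρ` for block two referred to each of `n` and `N`, and `ρ`, `ρ^k` for the two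
interpolation inequalities between `n` and `N`. With these the claim is an identity. -/
lemma silver_glue (r R μ V W Fn FN : ℝ) (X0 Xn Gn XN GN : E) (hr : 0 ≤ r) (hR : 0 ≤ R)
    (hr2 : r ^ 2 = 2 * r + 1) (hμ : μ = 1 + (r - 2) * R)
    (h1 : R * (R - 1) / 2 * ‖Gn‖ ^ 2 ≤
      V - (R - 1) * Fn + 1 / 2 * (‖X0‖ ^ 2 - ‖Xn‖ ^ 2))
    (h2 : R * (R - 1) / 2 * ‖GN‖ ^ 2 ≤
      W - (R - 1) * FN + 1 / 2 * (‖Xn - μ • Gn‖ ^ 2 - ‖XN‖ ^ 2))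
    (hn : W ≤ (R - 1) * (Fn - 1 / 2 * ‖Gn‖ ^ 2) - ⟪Xn - μ • Gn - XN, Xn - Gn⟫_ℝ)
    (hN : W ≤ (R - 1) * (FN - 1 / 2 * ‖GN‖ ^ 2) - ⟪Xn - μ • Gn - XN, XN - GN⟫_ℝ)
    (hNn : SmoothLE XN GN FN Xn Gn Fn) (hnN : SmoothLE Xn Gn Fn XN GN FN) :
    R * r * (R * r - 1) / 2 * ‖GN‖ ^ 2 ≤
      V + μ * (Fn + 1 / 2 * ‖Gn‖ ^ 2 - ⟪Gn, Xn⟫_ℝ) + W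
        - (R * r - 1) * FN + 1 / 2 * (‖X0‖ ^ 2 - ‖XN‖ ^ 2) := by
  unfold SmoothLE at hNn hnN
  simp only [norm_sub_sq_real, norm_smul, mul_pow, Real.norm_eq_abs, sq_abs, inner_sub_left,
    inner_sub_right, real_inner_smul_left, real_inner_smul_right, real_inner_self_eq_norm_sq,
    real_inner_comm Gn GN, real_inner_comm Gn Xn, real_inner_comm Xn XN, real_inner_comm GN XN,
    real_inner_comm Xn GN, real_inner_comm Gn XN] at h1 h2 hn hN hNn hnN ⊢
  have h2' := mul_le_mul_of_nonneg_left h2 (by positivity : 0 ≤ 1 + 2 * r)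
  have hn' := mul_le_mul_of_nonneg_left hn hr
  have hN' := mul_le_mul_of_nonneg_left hN hr
  have hNn' := mul_le_mul_of_nonneg_left hNn hr
  have hnN' := mul_le_mul_of_nonneg_left hnN hR
  subst hμ
  linear_combination h1 + h2' + hn' + hN' + hNn' + hnN' +
    (1 / 2 * R ^ 2 * ‖GN‖ ^ 2 - R * ⟪Gn, Xn⟫_ℝ + (R ^ 2 * r + R - 3 / 2 * R ^ 2) * ‖Gn‖ ^ 2
      + R * ⟪Gn, XN⟫_ℝ - R * ⟪Gn, GN⟫_ℝ) * hr2

/-- The certificate for one block of `2^k - 1` silver steps. It involves no minimizer: together with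
the inequalities of `silverSum_le` for a reference point `z`, it controls the distance to `z`. -/
lemma silver_certificate (k : ℕ) : ∀ (X G : ℕ → E) (F : ℕ → ℝ),
    (∀ i < 2 ^ k - 1, X (i + 1) = X i - silverStep i • G i) →
    (∀ i j, SmoothLE (X i) (G i) (F i) (X j) (G j) (F j)) →
    silverRho ^ k * (silverRho ^ k - 1) / 2 * ‖G (2 ^ k - 1)‖ ^ 2 ≤
      silverSum X G F (2 ^ k - 1) - (silverRho ^ k - 1) * F (2 ^ k - 1)
        + 1 / 2 * (‖X 0‖ ^ 2 - ‖X (2 ^ k - 1)‖ ^ 2) := by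
  induction k with
  | zero => intro X G F _ _; simp [silverSum]
  | succ k ih =>
    intro X G F hX hQ
    have hk : 1 ≤ 2 ^ k := Nat.one_le_two_pow
    have hlast : 2 ^ (k + 1) - 1 = 2 ^ k + (2 ^ k - 1) := by rw [pow_succ]; omega
    have hX' : ∀ i < 2 ^ k - 1, X (2 ^ k + (i + 1)) =
        X (2 ^ k + i) - silverStep i • G (2 ^ k + i) := by
      intro i hi
      rw [← silverStep_two_pow_add (k := k) (i := i) (by omega), ← hX _ (by omega), add_assoc]
    have hmid : X (2 ^ k) = X (2 ^ k - 1) - silverStep (2 ^ k - 1) • G (2 ^ k - 1) := by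
      rw [← hX _ (by omega), Nat.sub_add_cancel hk]
    have hsum : silverSum X G F (2 ^ (k + 1) - 1) = silverSum X G F (2 ^ k - 1) +
        silverStep (2 ^ k - 1) * (F (2 ^ k - 1) + 1 / 2 * ‖G (2 ^ k - 1)‖ ^ 2
          - ⟪G (2 ^ k - 1), X (2 ^ k - 1)⟫_ℝ) +
        silverSum (fun i => X (2 ^ k + i)) (fun i => G (2 ^ k + i)) (fun i => F (2 ^ k + i))
          (2 ^ k - 1) := by
      unfold silverSum
      rw [sum_range_silver]
      congr 1
      refine Finset.sum_congr rfl fun i hi => ?_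
      have := Finset.mem_range.1 hi
      rw [silverStep_two_pow_add (by omega)]
    have h1 := ih X G F (fun i hi => hX i (by omega)) hQ
    have h2 := ih (fun i => X (2 ^ k + i)) (fun i => G (2 ^ k + i)) (fun i => F (2 ^ k + i)) hX'
      (fun i j => hQ _ _)
    have href : ∀ j, silverSum (fun i => X (2 ^ k + i)) (fun i => G (2 ^ k + i))
        (fun i => F (2 ^ k + i)) (2 ^ k - 1) ≤ _ := fun j =>
      silverSum_le _ _ _ (X j) (G j) (F j) (2 ^ k - 1) hX' (fun i _ => hQ _ j)
    simp only [sum_silverStep, add_zero, hmid] at h2 href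
    rw [hsum, hlast, pow_succ silverRho k]
    exact silver_glue silverRho (silverRho ^ k) _ _ _ _ _ _ _ _ _ _ silverRho_pos.le
      (pow_nonneg silverRho_pos.le k) silverRho_sq (silverStep_two_pow_sub_one k) h1 h2
      (href _) (href _) (hQ _ _) (hQ _ _)

/-- The sharper rate `1 / (2 (2ρ^k - 1))`, for gradients normalized to be `1`-Lipschitz. -/
lemma silver_rate_normalized (k : ℕ) (X G : ℕ → E) (F : ℕ → ℝ) (z : E) (a : ℝ)
    (hX : ∀ i < 2 ^ k - 1, X (i + 1) = X i - silverStep i • G i)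
    (hQ : ∀ i j, SmoothLE (X i) (G i) (F i) (X j) (G j) (F j))
    (hz : ∀ i, SmoothLE (X i) (G i) (F i) z 0 a) :
    (2 * silverRho ^ k - 1) * (F (2 ^ k - 1) - a) ≤ 1 / 2 * ‖X 0 - z‖ ^ 2 := by
  have h1 := silver_certificate k X G F hX hQ
  have h2 := silverSum_le X G F z 0 a _ hX (fun i _ => hz i)
  have h3 := mul_le_mul_of_nonneg_left (hz (2 ^ k - 1)) (pow_nonneg silverRho_pos.le k)
  rw [sum_silverStep] at h2
  generalize silverRho ^ k = R at *
  generalize X (2 ^ k - 1) = Xn, G (2 ^ k - 1) = Gn, F (2 ^ k - 1) = Fn at *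
  have h4 : 0 ≤ ‖R • Gn - (Xn - z)‖ ^ 2 := sq_nonneg _
  simp only [norm_sub_sq_real, norm_smul, mul_pow, Real.norm_eq_abs, sq_abs, inner_sub_left,
    inner_sub_right, real_inner_smul_left, norm_zero, sub_zero] at h1 h2 h3 h4 ⊢
  linarith

end Certificate

/-! ### Interpolation inequality and the rate -/

section Smooth

variable {E : Type*} [NormedAddCommGroup E] [InnerProductSpace ℝ E] [CompleteSpace E]

/-- The quadratic upper bound for a function with Lipschitz gradient: along the segment from `x`,
the derivative of `f` minus the bound is nonpositive by Cauchy–Schwarz. -/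
lemma le_quadratic_of_lipschitz_gradient {f : E → ℝ} {L : ℝ} (hdiff : Differentiable ℝ f)
    (hlip : ∀ x y, ‖gradient f x - gradient f y‖ ≤ L * ‖x - y‖) (x v : E) :
    f (x + v) ≤ f x + ⟪gradient f x, v⟫_ℝ + L / 2 * ‖v‖ ^ 2 := by
  let φ : ℝ → ℝ := fun t => f (x + t • v) - t * ⟪gradient f x, v⟫_ℝ - L / 2 * ‖v‖ ^ 2 * t ^ 2
  have hφ : ∀ t, HasDerivAt φ
      (⟪gradient f (x + t • v), v⟫_ℝ - ⟪gradient f x, v⟫_ℝ - L * ‖v‖ ^ 2 * t) t := by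
    intro t
    have hline : HasDerivAt (fun t : ℝ => x + t • v) v t := by
      simpa using ((hasDerivAt_id t).smul_const v).const_add x
    have hf : HasDerivAt (fun t : ℝ => f (x + t • v)) ⟪gradient f (x + t • v), v⟫_ℝ t := by
      have h := (hdiff (x + t • v)).hasGradientAt.hasFDerivAt.comp_hasDerivAt t hline
      simpa [Function.comp_def] using h
    have h := (hf.sub ((hasDerivAt_id t).mul_const ⟪gradient f x, v⟫_ℝ)).sub
      ((hasDerivAt_pow 2 t).const_mul (L / 2 * ‖v‖ ^ 2))
    exact h.congr_deriv (by norm_num; ring)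
  have hanti : AntitoneOn φ (Set.Icc 0 1) := by
    refine antitoneOn_of_deriv_nonpos (convex_Icc 0 1)
      (fun t _ => (hφ t).continuousAt.continuousWithinAt)
      (fun t _ => (hφ t).differentiableAt.differentiableWithinAt) fun t ht => ?_
    rw [interior_Icc] at ht
    have h1 := real_inner_le_norm (gradient f (x + t • v) - gradient f x) v
    have h2 := mul_le_mul_of_nonneg_right (hlip (x + t • v) x) (norm_nonneg v)
    rw [inner_sub_left] at h1
    rw [add_sub_cancel_left, norm_smul, Real.norm_of_nonneg ht.1.le] at h2
    rw [(hφ t).deriv]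
    linarith
  have h := hanti (Set.left_mem_Icc.2 zero_le_one) (Set.right_mem_Icc.2 zero_le_one) zero_le_one
  simp only [φ, one_smul, zero_smul, add_zero] at h
  linarith

/-- The interpolation inequality of a convex function with `L`-Lipschitz gradient, rescaled by `L`.
It compares the tangent at `x` with the quadratic upper bound at `y`, both evaluated at
`y - (∇f(y) - ∇f(x)) / L`. -/
lemma smoothLE_of_convex {f : E → ℝ} {L : ℝ} (hL : 0 < L) (hdiff : Differentiable ℝ f)
    (hconv : ∀ x y, f y ≥ f x + ⟪gradient f x, y - x⟫_ℝ)
    (hlip : ∀ x y, ‖gradient f x - gradient f y‖ ≤ L * ‖x - y‖) (x y : E) :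
    SmoothLE x (L⁻¹ • gradient f x) (L⁻¹ * f x) y (L⁻¹ • gradient f y) (L⁻¹ * f y) := by
  have h1 := le_quadratic_of_lipschitz_gradient hdiff hlip y
    (L⁻¹ • (gradient f x - gradient f y))
  have h2 := hconv x (y + L⁻¹ • (gradient f x - gradient f y))
  have h3 : ⟪gradient f x, L⁻¹ • (gradient f x - gradient f y)⟫_ℝ
      = ⟪gradient f y, L⁻¹ • (gradient f x - gradient f y)⟫_ℝ
        + L⁻¹ * ‖gradient f x - gradient f y‖ ^ 2 := by
    rw [← real_inner_self_eq_norm_sq, real_inner_smul_right, real_inner_smul_right,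
      inner_sub_left]
    ring
  rw [add_sub_right_comm, inner_add_right, h3] at h2
  rw [norm_smul, Real.norm_of_nonneg (inv_pos.2 hL).le] at h1
  have h4 : L / 2 * (L⁻¹ * ‖gradient f x - gradient f y‖) ^ 2
      = L⁻¹ / 2 * ‖gradient f x - gradient f y‖ ^ 2 := by
    field_simp
  rw [h4] at h1
  have h5 := mul_le_mul_of_nonneg_left (h2.le.trans h1) (inv_pos.2 hL).le
  unfold SmoothLE
  rw [← smul_sub, norm_smul, Real.norm_of_nonneg (inv_pos.2 hL).le, real_inner_smul_left]
  linarith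

end Smooth

lemma inv_le_silverRate (k : ℕ) : (2 * (2 * silverRho ^ k - 1))⁻¹ ≤ silverRate k := by
  unfold silverRate
  have hR : 1 ≤ silverRho ^ k := one_le_pow₀ (by linarith [two_le_silverRho])
  rw [mul_comm 2 k, pow_mul]
  refine inv_anti₀ (by positivity) ?_
  have h : Real.sqrt (4 * (silverRho ^ k) ^ 2 - 3) ≤ 4 * silverRho ^ k - 3 :=
    Real.sqrt_le_iff.2 ⟨by linarith, by nlinarith⟩
  linarith

/-- Euclidean instance of Theorem 4.1: silver step-size gradient descent on a convex
`L`-smooth function achieves `f(x_n) - f(x_*) ≤ r_k L ‖x_0 - x_*‖²` for `n = 2^k - 1`. -/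
theorem silver_stepsize_gd_convex_rate {d : ℕ}
    (f : EuclideanSpace ℝ (Fin d) → ℝ) (L : ℝ) (hL : 0 < L)
    (hdiff : Differentiable ℝ f)
    (hconv : ∀ x y : EuclideanSpace ℝ (Fin d), f y ≥ f x + ⟪gradient f x, y - x⟫_ℝ)
    (hlip : ∀ x y : EuclideanSpace ℝ (Fin d),
      ‖gradient f x - gradient f y‖ ≤ L * ‖x - y‖)
    (xstar : EuclideanSpace ℝ (Fin d)) (hmin : ∀ x, f xstar ≤ f x)
    (x : ℕ → EuclideanSpace ℝ (Fin d))
    (hiter : ∀ i, x (i + 1) = x i - (silverStep i / L) • gradient f (x i))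
    (k : ℕ) (hk : 1 ≤ k) :
    f (x (2 ^ k - 1)) - f xstar ≤ silverRate k * L * ‖x 0 - xstar‖ ^ 2 := by
  have hgrad : gradient f xstar = 0 := by
    have h : fderiv ℝ f xstar = 0 := IsLocalMin.fderiv_eq_zero (Filter.Eventually.of_forall hmin)
    simp [gradient, h]
  have hQ := smoothLE_of_convex hL hdiff hconv hlip
  have h := silver_rate_normalized k x (fun i => L⁻¹ • gradient f (x i)) (fun i => L⁻¹ * f (x i))
    xstar (L⁻¹ * f xstar) (fun i _ => by rw [hiter, smul_smul, div_eq_mul_inv])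
    (fun i j => hQ _ _) (fun i => by simpa [hgrad] using hQ (x i) xstar)
  have hR : 1 ≤ silverRho ^ k := one_le_pow₀ (by linarith [two_le_silverRho])
  have hpos : 0 < 2 * (2 * silverRho ^ k - 1) := by linarith
  calc f (x (2 ^ k - 1)) - f xstar
      = (2 * (2 * silverRho ^ k - 1))⁻¹ * L * (2 * ((2 * silverRho ^ k - 1) *
          (L⁻¹ * f (x (2 ^ k - 1)) - L⁻¹ * f xstar))) := by
        have : 2 * silverRho ^ k - 1 ≠ 0 := by linarith
        field_simp
    _ ≤ (2 * (2 * silverRho ^ k - 1))⁻¹ * L * ‖x 0 - xstar‖ ^ 2 := by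
        refine mul_le_mul_of_nonneg_left ?_ (by positivity)
        linarith
    _ ≤ silverRate k * L * ‖x 0 - xstar‖ ^ 2 := by
        gcongr
        exact inv_le_silverRate k
end

section
/- Let f : ℝ^d → ℝ be differentiable, α-strongly convex (i.e., f(y) ≥ f(x) + ⟨∇f(x), y − x⟩ + (α/2)‖y − x‖² for all x, y) with ∇f L-Lipschitz, 0 < α ≤ L, condition number κ := L/α, and minimizer x_*. Fix an integer k ≥ 1 and block length m := 2^k − 1, and run restarted silver gradient descent: starting from x_0, each block performs m gradient descent steps x_{i+1} = x_i − (η_i / L)·∇f(x_i) with the silver step-size index reset to 0 at the start of every block, and each new block starts from the final iterate of the previous one. After ℓ blocks (total n = ℓ·m iterations), the output x_n satisfies ‖x_n − x_*‖² ≤ (2κ r_k)^ℓ · ‖x_0 − x_*‖². -/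
open scoped InnerProductSpace

/-!
Normalise to `L = 1`, i.e. work with `f / L` and `g = ∇f / L`. Cocoercivity of the gradient says that
every pair `(p, φ) = (y - g y, f y - ‖g y‖² / 2)` satisfies
`f z + ⟪g z, p - z⟫ + ‖g z‖² / 2 ≤ φ` for all `z`; so does `(x_*, f x_*)`. Call such a pair a
reference. With `R = ρ ^ k` and `n = 2 ^ k - 1`, the silver block satisfies, for *every* reference,

  `(R - 1) (f x_n - φ) + (R - 1) R / 2 ‖g x_n‖² + ‖x_n - p‖² / 2 ≤ ‖x_0 - p‖² / 2`.

This is `silver_block`, proved by induction on `k`: a block of order `k + 1` is a block of order `k`,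
one step of length `1 + R / ρ`, and another block of order `k`. The inequality of order `k` is used
for the first half at `(p, φ)`, and for the second half at `(p, φ)` and at the references attached to
the last iterates of the two halves; together with three basic inequalities between those two
iterates and `(p, φ)` these combine with explicit multipliers to the inequality of order `k + 1`
(`silver_glue`). Allowing all references, rather than only `x_*`, is what makes the induction close.

At `(x_*, f x_*)`, adding `R` times the reference inequality at `x_n` completes a square and gives
`f x_n - f x_* ≤ L ‖x_0 - x_*‖² / (4 R - 2)`, which is at most `r_k L ‖x_0 - x_*‖²`. Strong convexity
turns this into the contraction of one block.
-/

/-- A reference for a function `f` with field `g`: a point `p` and a value `φ` lying above all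
the bounds `f z + ⟪g z, p - z⟫ + ‖g z‖² / 2`. If `f` is convex and `1`-smooth with gradient `g`, these
are satisfied by a minimizer with its value. -/
def IsSilverRef {E : Type*} [NormedAddCommGroup E] [InnerProductSpace ℝ E]
    (f : E → ℝ) (g : E → E) (p : E) (φ : ℝ) : Prop :=
  ∀ z, f z + ⟪g z, p - z⟫_ℝ + ‖g z‖ ^ 2 / 2 ≤ φ

lemma one_le_silverRho : 1 ≤ silverRho := by
  unfold silverRho
  linarith [Real.sqrt_nonneg 2]

/-- The middle step of a block of order `k + 1`. -/
lemma silverStep_middle (k : ℕ) :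
    silverStep (2 ^ k - 1) = 1 + silverRho ^ k / silverRho := by
  have h : 2 ^ k - 1 + 1 = 2 ^ k := Nat.sub_add_cancel Nat.one_le_two_pow
  unfold silverStep
  rw [h, padicValNat.prime_pow, zpow_sub_one₀ silverRho_pos.ne', zpow_natCast, div_eq_mul_inv]

/-- The steps after the middle one repeat the steps before it. -/
lemma silverStep_shift (k i : ℕ) (hi : i < 2 ^ k - 1) :
    silverStep (2 ^ k + i) = silverStep i := by
  have h : padicValNat 2 (2 ^ k + i + 1) = padicValNat 2 (i + 1) := by
    have hlt : padicValNat 2 (i + 1) < k := by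
      by_contra! hc
      have hd : 2 ^ k ∣ i + 1 := (pow_dvd_pow 2 hc).trans pow_padicValNat_dvd
      have := Nat.le_of_dvd (Nat.succ_pos i) hd
      omega
    have hv : padicValRat 2 ((i + 1 : ℕ) : ℚ) < padicValRat 2 ((2 ^ k : ℕ) : ℚ) := by
      rw [padicValRat.of_nat, padicValRat.of_nat, padicValNat.prime_pow]
      exact_mod_cast hlt
    have hadd := padicValRat.add_eq_of_lt (by positivity) (by positivity) (by positivity) hv
    rw [← Nat.cast_add, padicValRat.of_nat, padicValRat.of_nat] at hadd
    rw [add_assoc, add_comm]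
    exact_mod_cast hadd
  unfold silverStep
  rw [h]

section Block

variable {E : Type*} [NormedAddCommGroup E] [InnerProductSpace ℝ E]

/-- The combination of inequalities behind the doubling of a silver block. Here `x, F, g` (resp.
`X, N, G`) are the last iterate of the first (resp. second) half, its value and gradient, and
`S = R - 1` is the total length of the steps in one half. -/
lemma silver_glue_s1 (ρ R t : ℝ) (hρ : ρ ^ 2 = 2 * ρ + 1) (hρ0 : 0 ≤ ρ) (ht : 0 ≤ t)
    (hR : R = ρ * t) (x g X G x0 p : E) (F N φ : ℝ)
    (h1 : (R - 1) * (F - φ) + (R - 1) * R / 2 * ‖g‖ ^ 2 + ‖x - p‖ ^ 2 / 2 ≤ ‖x0 - p‖ ^ 2 / 2)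
    (h2 : (R - 1) * (N - φ) + (R - 1) * R / 2 * ‖G‖ ^ 2 + ‖X - p‖ ^ 2 / 2
      ≤ ‖x - (1 + t) • g - p‖ ^ 2 / 2)
    (h3 : (R - 1) * (N - (F - ‖g‖ ^ 2 / 2)) + (R - 1) * R / 2 * ‖G‖ ^ 2
      + ‖X - (x - g)‖ ^ 2 / 2 ≤ ‖x - (1 + t) • g - (x - g)‖ ^ 2 / 2)
    (h3' : (R - 1) * (N - (N - ‖G‖ ^ 2 / 2)) + (R - 1) * R / 2 * ‖G‖ ^ 2
      + ‖X - (X - G)‖ ^ 2 / 2 ≤ ‖x - (1 + t) • g - (X - G)‖ ^ 2 / 2)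
    (h4 : F + ⟪g, p - x⟫_ℝ + ‖g‖ ^ 2 / 2 ≤ φ)
    (h5 : N + ⟪G, x - X⟫_ℝ + ‖G - g‖ ^ 2 / 2 ≤ F)
    (h6 : F + ⟪g, X - x⟫_ℝ + ‖g - G‖ ^ 2 / 2 ≤ N) :
    (ρ * R - 1) * (N - φ) + (ρ * R - 1) * (ρ * R) / 2 * ‖G‖ ^ 2 + ‖X - p‖ ^ 2 / 2
      ≤ ‖x0 - p‖ ^ 2 / 2 := by
  -- In the displacements `v = x - p` and `u = X - x` everything is a quadratic form.
  obtain ⟨v, rfl⟩ : ∃ v, x = p + v := ⟨x - p, by abel⟩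
  obtain ⟨u, rfl⟩ : ∃ u, X = p + v + u := ⟨X - (p + v), by abel⟩
  have e1 : p + v - p = v := by abel
  have e2 : p + v - (1 + t) • g - p = v - (1 + t) • g := by abel
  have e3 : p + v + u - (p + v - g) = u + g := by abel
  have e4 : p + v - (1 + t) • g - (p + v - g) = -(t • g) := by module
  have e5 : p + v + u - (p + v + u - G) = G := by abel
  have e6 : p + v - (1 + t) • g - (p + v + u - G) = G - u - (1 + t) • g := by abel
  have e7 : p - (p + v) = -v := by abel
  have e8 : p + v - (p + v + u) = -u := by abel
  have e9 : p + v + u - (p + v) = u := by abel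
  have e10 : p + v + u - p = v + u := by abel
  rw [e1] at h1
  rw [e2, e10] at h2
  rw [e3, e4] at h3
  rw [e5, e6] at h3'
  rw [e7] at h4
  rw [e8] at h5
  rw [e9] at h6
  rw [e10]
  simp only [← real_inner_self_eq_norm_sq, inner_add_left, inner_add_right, inner_sub_left,
    inner_sub_right, inner_neg_left, inner_neg_right, real_inner_smul_left,
    real_inner_smul_right] at *
  simp only [real_inner_comm v u, real_inner_comm g u, real_inner_comm G u, real_inner_comm g v,
    real_inner_comm G g] at *
  subst hR
  have k3 := mul_le_mul_of_nonneg_left h3 hρ0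
  have k3' := mul_le_mul_of_nonneg_left h3' hρ0
  have k4 := mul_le_mul_of_nonneg_left h4 (show 0 ≤ 1 + t by linarith)
  have k5 := mul_le_mul_of_nonneg_left h5 hρ0
  have k6 := mul_le_mul_of_nonneg_left h6 (mul_nonneg hρ0 ht)
  -- With the weights `1, 1, ρ, ρ, 1 + t, ρ, R` on the seven hypotheses, both sides agree exactly,
  -- modulo `ρ² = 2ρ + 1`; the last summand accounts for that relation.
  linear_combination h1 + h2 + k3 + k3' + k4 + k5 + k6
    + (t * (F - φ) + ρ ^ 2 * t ^ 2 / 2 * ⟪G, G⟫_ℝ - (t ^ 2 + t) / 2 * ⟪g, g⟫_ℝ) * hρ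

/-- The inequality of a silver block, for an arbitrary reference. -/
lemma silver_block (f : E → ℝ) (g : E → E)
    (hco : ∀ y z, f z + ⟪g z, y - z⟫_ℝ + ‖g z - g y‖ ^ 2 / 2 ≤ f y) (k : ℕ) :
    ∀ x : ℕ → E, (∀ i < 2 ^ k - 1, x (i + 1) = x i - silverStep i • g (x i)) →
    ∀ p φ, IsSilverRef f g p φ →
      (silverRho ^ k - 1) * (f (x (2 ^ k - 1)) - φ)
        + (silverRho ^ k - 1) * silverRho ^ k / 2 * ‖g (x (2 ^ k - 1))‖ ^ 2
        + ‖x (2 ^ k - 1) - p‖ ^ 2 / 2 ≤ ‖x 0 - p‖ ^ 2 / 2 := by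
  -- Cocoercivity is exactly the statement that a gradient step from any point gives a reference.
  have href : ∀ y, IsSilverRef f g (y - g y) (f y - ‖g y‖ ^ 2 / 2) := by
    intro y z
    have h := hco y z
    rw [norm_sub_sq_real] at h
    rw [show y - g y - z = (y - z) - g y by abel, inner_sub_right]
    linarith
  induction k with
  | zero => intro x _ p φ _; simp
  | succ k ih =>
    intro x hx p φ hp
    have hpos : 1 ≤ 2 ^ k := Nat.one_le_two_pow
    have hpow : 2 ^ (k + 1) = 2 * 2 ^ k := by ring
    have hfirst : ∀ i < 2 ^ k - 1, x (i + 1) = x i - silverStep i • g (x i) :=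
      fun i hi => hx i (by omega)
    have hsecond : ∀ i < 2 ^ k - 1, x (2 ^ k + (i + 1))
        = x (2 ^ k + i) - silverStep i • g (x (2 ^ k + i)) := by
      intro i hi
      rw [← silverStep_shift k i hi]
      exact hx (2 ^ k + i) (by omega)
    have hmid : x (2 ^ k) = x (2 ^ k - 1)
        - (1 + silverRho ^ k / silverRho) • g (x (2 ^ k - 1)) := by
      rw [← silverStep_middle, ← hx (2 ^ k - 1) (by omega), Nat.sub_add_cancel hpos]
    have hlast : 2 ^ (k + 1) - 1 = 2 ^ k + (2 ^ k - 1) := by omega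
    have hs := ih (fun i => x (2 ^ k + i)) hsecond
    simp only [add_zero, hmid] at hs
    rw [hlast, pow_succ']
    exact silver_glue_s1 silverRho (silverRho ^ k) (silverRho ^ k / silverRho) silverRho_sq
      silverRho_pos.le (div_nonneg (pow_nonneg silverRho_pos.le _) silverRho_pos.le)
      (mul_div_cancel₀ _ silverRho_pos.ne').symm _ _ _ _ _ _ _ _ _
      (ih x hfirst p φ hp) (hs p φ hp) (hs _ _ (href _)) (hs _ _ (href _)) (hp _)
      (hco _ _) (hco _ _)

/-- The resulting bound on the function value at the end of a block; it is attained by Huber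
functions. -/
lemma silver_value (f : E → ℝ) (g : E → E)
    (hco : ∀ y z, f z + ⟪g z, y - z⟫_ℝ + ‖g z - g y‖ ^ 2 / 2 ≤ f y) (k : ℕ)
    (x : ℕ → E) (hx : ∀ i < 2 ^ k - 1, x (i + 1) = x i - silverStep i • g (x i))
    (p : E) (φ : ℝ) (hp : IsSilverRef f g p φ) :
    (4 * silverRho ^ k - 2) * (f (x (2 ^ k - 1)) - φ) ≤ ‖x 0 - p‖ ^ 2 := by
  have h1 := silver_block f g hco k x hx p φ hp
  have h2 := hp (x (2 ^ k - 1))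
  set R := silverRho ^ k
  set X := x (2 ^ k - 1)
  have hR : 0 ≤ R := pow_nonneg silverRho_pos.le _
  have h3 := mul_le_mul_of_nonneg_left h2 hR
  have h4 : 0 ≤ ‖X - p - R • g X‖ ^ 2 := sq_nonneg _
  rw [norm_sub_sq_real, norm_smul, Real.norm_of_nonneg hR, real_inner_smul_right,
    real_inner_comm] at h4
  rw [← neg_sub X p, inner_neg_right] at h3
  nlinarith

/-- A convex function with Lipschitz gradient has a cocoercive gradient. -/
lemma cocoercive_of_lipschitz [CompleteSpace E] (f : E → ℝ) (L : ℝ) (hL : 0 < L)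
    (hdiff : Differentiable ℝ f)
    (hconv : ∀ x y, f x + ⟪gradient f x, y - x⟫_ℝ ≤ f y)
    (hlip : ∀ x y, ‖gradient f x - gradient f y‖ ≤ L * ‖x - y‖) (y z : E) :
    f z + ⟪gradient f z, y - z⟫_ℝ + ‖gradient f z - gradient f y‖ ^ 2 / (2 * L) ≤ f y := by
  have hdesc : ∀ a v, f (a + v) ≤ f a + ⟪gradient f a, v⟫_ℝ + L / 2 * ‖v‖ ^ 2 := by
    intro a v
    let ψ : ℝ → ℝ := fun t => f (a + t • v) - t * ⟪gradient f a, v⟫_ℝ - L / 2 * ‖v‖ ^ 2 * t ^ 2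
    have hd : ∀ t, HasDerivAt ψ (⟪gradient f (a + t • v), v⟫_ℝ - ⟪gradient f a, v⟫_ℝ
        - L * ‖v‖ ^ 2 * t) t := by
      intro t
      have hline : HasDerivAt (fun s : ℝ => a + s • v) v t := by
        simpa using ((hasDerivAt_id t).smul_const v).const_add a
      have h1 := (hdiff (a + t • v)).hasGradientAt.hasFDerivAt.comp_hasDerivAt t hline
      have h2 := (hasDerivAt_id t).mul_const ⟪gradient f a, v⟫_ℝ
      have h3 := ((hasDerivAt_id t).pow 2).const_mul (L / 2 * ‖v‖ ^ 2)
      refine ((h1.sub h2).sub h3).congr_deriv ?_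
      simp
      ring
    have hanti : AntitoneOn ψ (Set.Icc 0 1) := by
      refine antitoneOn_of_deriv_nonpos (convex_Icc 0 1)
        (fun t _ => (hd t).continuousAt.continuousWithinAt)
        (fun t _ => (hd t).differentiableAt.differentiableWithinAt) ?_
      intro t ht
      rw [interior_Icc] at ht
      rw [(hd t).deriv, ← inner_sub_left]
      have h1 := real_inner_le_norm (gradient f (a + t • v) - gradient f a) v
      have h2 := hlip (a + t • v) a
      rw [add_sub_cancel_left, norm_smul, Real.norm_of_nonneg ht.1.le] at h2
      have h3 := mul_le_mul_of_nonneg_right h2 (norm_nonneg v)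
      nlinarith
    have h := hanti (Set.left_mem_Icc.2 zero_le_one) (Set.right_mem_Icc.2 zero_le_one) zero_le_one
    simp only [ψ, zero_smul, one_smul, add_zero] at h
    linarith
  -- Compare at the point reached from `y` by a gradient step of the tilted function
  -- `f - ⟪∇f z, ·⟫`, which is minimized at `z`.
  set w := gradient f z - gradient f y with hw
  have h1 := hconv z (y + (1 / L) • w)
  have h2 := hdesc y ((1 / L) • w)
  have h3 : ⟪gradient f z, w⟫_ℝ - ⟪gradient f y, w⟫_ℝ = ‖w‖ ^ 2 := by
    rw [← inner_sub_left, ← hw, real_inner_self_eq_norm_sq]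
  rw [show y + (1 / L) • w - z = (y - z) + (1 / L) • w by abel, inner_add_right,
    real_inner_smul_right] at h1
  rw [real_inner_smul_right, norm_smul, Real.norm_of_nonneg (by positivity)] at h2
  have h4 : L / 2 * (1 / L * ‖w‖) ^ 2 = ‖w‖ ^ 2 / (2 * L) := by field_simp
  have h5 : 1 / L * ‖w‖ ^ 2 = 2 * (‖w‖ ^ 2 / (2 * L)) := by field_simp
  have h6 : 1 / L * ⟪gradient f z, w⟫_ℝ - 1 / L * ⟪gradient f y, w⟫_ℝ = 1 / L * ‖w‖ ^ 2 := by
    rw [← h3]; ring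
  linarith

end Block

lemma silverRate_ge (k : ℕ) : (4 * silverRho ^ k - 2)⁻¹ ≤ silverRate k := by
  have hR : 1 ≤ silverRho ^ k := one_le_pow₀ one_le_silverRho
  unfold silverRate
  apply inv_anti₀ (by positivity)
  have h : Real.sqrt (4 * silverRho ^ (2 * k) - 3) ≤ 4 * silverRho ^ k - 3 := by
    rw [Real.sqrt_le_left (by linarith), mul_comm 2 k, pow_mul]
    nlinarith [sq_nonneg (silverRho ^ k - 1)]
  linarith

/-- Euclidean instance of Theorem 4.2: restarted silver step-size gradient descent on an
`α`-strongly convex, `L`-smooth function contracts the squared distance to the minimizer by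
`(2 κ r_k)` per block of `m = 2^k - 1` iterations, where `κ = L/α`.  The step-size index is
reset to `0` at the start of every block, i.e. step `i` uses `η_{i mod m}`. -/
theorem restarted_silver_gd_strongly_convex_rate {d : ℕ}
    (f : EuclideanSpace ℝ (Fin d) → ℝ) (L α : ℝ) (hα : 0 < α) (hαL : α ≤ L)
    (hdiff : Differentiable ℝ f)
    (hsconv : ∀ x y : EuclideanSpace ℝ (Fin d),
      f y ≥ f x + ⟪gradient f x, y - x⟫_ℝ + α / 2 * ‖y - x‖ ^ 2)
    (hlip : ∀ x y : EuclideanSpace ℝ (Fin d),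
      ‖gradient f x - gradient f y‖ ≤ L * ‖x - y‖)
    (xstar : EuclideanSpace ℝ (Fin d)) (hmin : ∀ x, f xstar ≤ f x)
    (k : ℕ) (hk : 1 ≤ k)
    (x : ℕ → EuclideanSpace ℝ (Fin d))
    (hiter : ∀ i, x (i + 1) =
      x i - (silverStep (i % (2 ^ k - 1)) / L) • gradient f (x i))
    (ℓ : ℕ) :
    ‖x (ℓ * (2 ^ k - 1)) - xstar‖ ^ 2 ≤
      (2 * (L / α) * silverRate k) ^ ℓ * ‖x 0 - xstar‖ ^ 2 := by
  have hL : 0 < L := hα.trans_le hαL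
  have hgrad : gradient f xstar = 0 := by
    have h : fderiv ℝ f xstar = 0 := IsLocalMin.fderiv_eq_zero (Filter.Eventually.of_forall hmin)
    simp [gradient, h]
  have hcoL := cocoercive_of_lipschitz f L hL hdiff
    (fun a b => by nlinarith [hsconv a b, sq_nonneg ‖b - a‖]) hlip
  have hco : ∀ y z, f z / L + ⟪L⁻¹ • gradient f z, y - z⟫_ℝ
      + ‖L⁻¹ • gradient f z - L⁻¹ • gradient f y‖ ^ 2 / 2 ≤ f y / L := by
    intro y z
    rw [← smul_sub, norm_smul, Real.norm_of_nonneg (by positivity), real_inner_smul_left]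
    have h := div_le_div_of_nonneg_right (hcoL y z) hL.le
    refine le_of_eq_of_le ?_ h
    field_simp
  have hstar : IsSilverRef (fun z => f z / L) (fun z => L⁻¹ • gradient f z) xstar
      (f xstar / L) := by
    intro z
    simpa [hgrad] using hco xstar z
  have hr := silverRate_ge k
  have hR : 0 < 4 * silverRho ^ k - 2 := by
    linarith [one_le_pow₀ one_le_silverRho (n := k)]
  have hm : 0 < 2 ^ k - 1 := Nat.sub_pos_of_lt (Nat.one_lt_two_pow (by omega))
  induction ℓ with
  | zero => simp
  | succ ℓ ih =>
    have hv := silver_value _ _ hco k (fun i => x (ℓ * (2 ^ k - 1) + i)) (by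
      intro i hi
      have h := hiter (ℓ * (2 ^ k - 1) + i)
      rw [Nat.mul_add_mod', Nat.mod_eq_of_lt hi] at h
      rw [← add_assoc, h, smul_smul, div_eq_mul_inv]) xstar (f xstar / L) hstar
    rw [add_zero, ← Nat.succ_mul, Nat.succ_eq_add_one] at hv
    set X := x ((ℓ + 1) * (2 ^ k - 1))
    set Y := x (ℓ * (2 ^ k - 1))
    have hs := hsconv xstar X
    rw [hgrad, inner_zero_left, add_zero] at hs
    have hblock : ‖X - xstar‖ ^ 2 ≤ 2 * (L / α) * silverRate k * ‖Y - xstar‖ ^ 2 := by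
      have h1 : f X / L - f xstar / L ≤ silverRate k * ‖Y - xstar‖ ^ 2 := by
        refine le_trans ?_ (mul_le_mul_of_nonneg_right hr (sq_nonneg _))
        rwa [inv_mul_eq_div, le_div_iff₀' hR]
      have h2 : ‖X - xstar‖ ^ 2 ≤ 2 * (L / α) * (f X / L - f xstar / L) := by
        rw [show 2 * (L / α) * (f X / L - f xstar / L) = 2 * (f X - f xstar) / α by field_simp,
          le_div_iff₀ hα]
        linarith
      rw [mul_assoc]
      exact h2.trans (mul_le_mul_of_nonneg_left h1 (by positivity))
    have hr0 : 0 ≤ silverRate k := (inv_nonneg.2 hR.le).trans hr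
    rw [pow_succ' (2 * (L / α) * silverRate k), mul_assoc (2 * (L / α) * silverRate k)]
    exact hblock.trans (mul_le_mul_of_nonneg_left ih (by positivity))
end
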